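/- arXiv:1501.04513 — 3 statements merged into one kernel-verified Lean document; each statement's English description precedes it below -/
import Mathlib

section
/- Suppose f, g : ℝ^N → (−∞, ∞] are Borel measurable, m_f := inf f and m_g := inf g are finite, and m_f + m_g ≥ 0. Set m_{f,g} := (m_f − m_g)/2. Then f□g ≥ 0, f̌ − m_{f,g} ≥ 0, ǧ + m_{f,g} ≥ 0, and for every Young function φ: ‖(f□g)⁻¹‖_φ ≤ 2^{N−1} ( ‖(f̌ − m_{f,g})⁻¹‖_φ + ‖(ǧ + m_{f,g})⁻¹‖_φ ). -/
open MeasureTheory Filter Set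
open scoped ENNReal NNReal Pointwise

noncomputable section

/-- `ℝ^N` with the Euclidean structure and Lebesgue measure. -/
abbrev ES (N : ℕ) := EuclideanSpace ℝ (Fin N)

variable {N : ℕ}

/-- The operation `(f ⊼ g)(x) = sup_y min (f (x - y)) (g y)` for extended-real valued
functions. -/
def supMinE (f g : ES N → EReal) (x : ES N) : EReal := ⨆ y, min (f (x - y)) (g y)

/-- The operation `(f ⊻ g)(x) = inf_y max (f (x - y)) (g y)` for extended-real valued
functions. -/
def infMaxE (f g : ES N → EReal) (x : ES N) : EReal := ⨅ y, max (f (x - y)) (g y)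

/-- The infimal convolution `(f □ g)(x) = inf_y (f (x - y) + g y)`. -/
def infConvE (f g : ES N → EReal) (x : ES N) : EReal := ⨅ y, (f (x - y) + g y)

/-- The operation `(f ⊼ g)(x) = sup_y min (f (x - y)) (g y)` for `[0,∞]`-valued functions. -/
def supMin (f g : ES N → ℝ≥0∞) (x : ES N) : ℝ≥0∞ := ⨆ y, min (f (x - y)) (g y)

/-- A Young function: a nonconstant, nondecreasing, convex, left-continuous
`φ : [0,∞] → [0,∞]` with `φ 0 = 0`. -/
structure IsYoungFunction (φ : ℝ≥0∞ → ℝ≥0∞) : Prop where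
  nonconstant : ∃ x y, φ x ≠ φ y
  map_zero : φ 0 = 0
  mono : Monotone φ
  convex : ∀ ⦃a b x y : ℝ≥0∞⦄, a + b = 1 → φ (a * x + b * y) ≤ a * φ x + b * φ y
  left_continuous : ∀ x, ContinuousWithinAt φ (Set.Iio x) x

/-- The Luxemburg norm `‖h‖_φ = inf {r > 0 | ∫ φ (r⁻¹ |h|) ≤ 1}` (`= ∞` if no such `r`),
for a nonnegative function `h`. -/
def luxNorm (φ : ℝ≥0∞ → ℝ≥0∞) (h : ES N → ℝ≥0∞) : ℝ≥0∞ :=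
  sInf {r : ℝ≥0∞ | 0 < r ∧ ∫⁻ x, φ (r⁻¹ * h x) ≤ 1}

/-- The nonnegative part of an extended real, as an element of `[0,∞]`. -/
def toENN (a : EReal) : ℝ≥0∞ := if a = ⊤ then ⊤ else ENNReal.ofReal a.toReal

/-- The reciprocal `1/a ∈ [0,∞]` of an extended real (intended for `a ≥ 0`), with the
conventions `1/0 = ∞` and `1/∞ = 0`. -/
def eInv (a : EReal) : ℝ≥0∞ := (toENN a)⁻¹

/-- The enclosing radius of a set `X ⊆ ℝ^N`: the infimum of the radii of closed balls
containing `X` (`0` for `X = ∅`, `∞` if `X` is unbounded). -/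
def encRadius (X : Set (ES N)) : ℝ≥0∞ := sInf {r : ℝ≥0∞ | ∃ c : ES N, ∀ x ∈ X, edist x c ≤ r}

/-- The transform `f̂(x) = γ_f^+(|x|)` where `γ_f^+(t) = inf {ξ | ρ_f^+(ξ) ≤ t}` and
`ρ_f^+(ξ)` is the enclosing radius of the upper level set `{f > ξ}`. -/
def hatE (f : ES N → EReal) (x : ES N) : EReal :=
  sInf {ξ : EReal | encRadius {y | ξ < f y} ≤ (‖x‖₊ : ℝ≥0∞)}

/-- The lower transform `f̌ = -((-f)^)`. -/
def checkE (f : ES N → EReal) (x : ES N) : EReal := - hatE (fun y => - f y) x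

/-- The transform `f̂` for `[0,∞]`-valued functions. -/
def hatT (f : ES N → ℝ≥0∞) (x : ES N) : ℝ≥0∞ :=
  sInf {ξ : ℝ≥0∞ | encRadius {y | ξ < f y} ≤ (‖x‖₊ : ℝ≥0∞)}

/-- The lower transform `f̌(x) = γ_f^-(|x|)`, `γ_f^-(t) = sup {ξ | ρ({f < ξ}) ≤ t}`,
for `[0,∞]`-valued functions. -/
def checkT (f : ES N → ℝ≥0∞) (x : ES N) : ℝ≥0∞ :=
  sSup {ξ : ℝ≥0∞ | encRadius {y | f y < ξ} ≤ (‖x‖₊ : ℝ≥0∞)}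

/-- The `L^p` "norm" (`p ∈ [1,∞]`, essential supremum when `p = ∞`) of a `[0,∞]`-valued
function. -/
def pNorm (p : ℝ≥0∞) (h : ES N → ℝ≥0∞) : ℝ≥0∞ :=
  if p = ∞ then essSup h volume else (∫⁻ x, h x ^ p.toReal) ^ (1 / p.toReal)

/-- The lower transform as a function of the radius. -/
def checkRadial (f : ES N → EReal) (t : ℝ≥0) : EReal :=
  -sInf {ξ : EReal | encRadius {y | ξ < -f y} ≤ (t : ℝ≥0∞)}

theorem checkRadial_mono (f : ES N → EReal) : Monotone (checkRadial f) := by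
  intro s t hst
  refine EReal.neg_le_neg_iff.2 (sInf_le_sInf fun ξ hξ => ?_)
  exact (show _ ≤ (s : ℝ≥0∞) from hξ).trans (ENNReal.coe_le_coe.2 hst)

theorem encRadius_mono {X Y : Set (ES N)} (h : X ⊆ Y) : encRadius X ≤ encRadius Y :=
  sInf_le_sInf fun _ ⟨c, hc⟩ => ⟨c, fun x hx => hc x (h hx)⟩

theorem encRadius_empty : encRadius (∅ : Set (ES N)) = 0 :=
  le_antisymm (sInf_le ⟨0, by simp⟩) bot_le

/-- A lower bound of `f` is a lower bound of its lower transform. -/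
theorem le_checkE {f : ES N → EReal} {a : EReal} (h : ∀ x, a ≤ f x) (x : ES N) :
    a ≤ checkE f x := by
  refine EReal.le_neg_of_le_neg (sInf_le ?_)
  have : {y | -a < -f y} = ∅ := by
    ext y
    simpa using h y
  change encRadius {y | -a < -f y} ≤ _
  rw [this, encRadius_empty]
  exact bot_le

/-- The lower transform is at most `η` inside the ball whose radius is the enclosing radius of
`{f < η}`. -/
theorem checkE_le_of_enorm_lt_encRadius {f : ES N → EReal} {η : EReal} {x : ES N}
    (hx : ‖x‖ₑ < encRadius {y | f y < η}) : checkE f x ≤ η := by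
  refine EReal.neg_le_of_neg_le (le_sInf fun ζ hζ => ?_)
  by_contra! hlt
  refine absurd hx (not_lt.2 (le_trans (encRadius_mono fun y hy => ?_) hζ))
  exact hlt.trans (EReal.neg_lt_neg_iff.2 hy)

/-- The layer cake formula for `[0,∞]`-valued functions. -/
theorem lintegral_eq_lintegral_meas_ofReal_lt {α : Type*} [MeasurableSpace α] (μ : Measure α)
    [SFinite μ] {k : α → ℝ≥0∞} (hk : Measurable k) :
    ∫⁻ x, k x ∂μ = ∫⁻ t in Ioi (0 : ℝ), μ {x | ENNReal.ofReal t < k x} := by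
  have hmeas : MeasurableSet {p : α × ℝ | ENNReal.ofReal p.2 < k p.1} :=
    measurableSet_lt (by fun_prop) (by fun_prop)
  have inner (x : α) : k x =
      ∫⁻ t in Ioi (0 : ℝ), {t : ℝ | ENNReal.ofReal t < k x}.indicator 1 t := by
    have hset : MeasurableSet {t : ℝ | ENNReal.ofReal t < k x} :=
      measurableSet_lt (by fun_prop) (by fun_prop)
    rw [lintegral_indicator_one hset, Measure.restrict_apply hset]
    by_cases hx : k x = ∞
    · have : {t : ℝ | ENNReal.ofReal t < k x} = univ := by ext; simp [hx]
      rw [this, univ_inter, Real.volume_Ioi, hx]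
    · have : {t : ℝ | ENNReal.ofReal t < k x} ∩ Ioi 0 = Ioo 0 (k x).toReal := by
        ext t
        simp only [mem_inter_iff, mem_ofPred_eq, mem_Ioi, mem_Ioo]
        rw [and_comm]
        exact and_congr_right fun ht => ENNReal.ofReal_lt_iff_lt_toReal ht.le hx
      rw [this, Real.volume_Ioo, sub_zero, ENNReal.ofReal_toReal hx]
  calc ∫⁻ x, k x ∂μ
      = ∫⁻ x, (∫⁻ t in Ioi (0 : ℝ),
          {p : α × ℝ | ENNReal.ofReal p.2 < k p.1}.indicator 1 (x, t)) ∂μ :=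
        lintegral_congr fun x => inner x
    _ = ∫⁻ t in Ioi (0 : ℝ), (∫⁻ x,
          {p : α × ℝ | ENNReal.ofReal p.2 < k p.1}.indicator 1 (x, t) ∂μ) :=
        lintegral_lintegral_swap (measurable_one.indicator hmeas).aemeasurable
    _ = _ := by
        refine lintegral_congr fun t => ?_
        exact lintegral_indicator_one (s := {x | ENNReal.ofReal t < k x})
          (measurableSet_lt measurable_const hk)

/-- For an arbitrary function the layer cake integral of the outer measures of the level sets
bounds the integral. -/
theorem lintegral_le_lintegral_meas_ofReal_lt {α : Type*} [MeasurableSpace α] (μ : Measure α)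
    [SFinite μ] (k : α → ℝ≥0∞) :
    ∫⁻ x, k x ∂μ ≤ ∫⁻ t in Ioi (0 : ℝ), μ {x | ENNReal.ofReal t < k x} := by
  obtain ⟨k', hk', hle, heq⟩ := exists_measurable_le_lintegral_eq μ k
  rw [heq, lintegral_eq_lintegral_meas_ofReal_lt μ hk']
  exact lintegral_mono fun t => measure_mono fun x hx => lt_of_lt_of_le hx (hle x)

/-- A strict superlevel set of a Young function is an open half-line. -/
theorem IsYoungFunction.exists_lt_iff {φ : ℝ≥0∞ → ℝ≥0∞} (hφ : IsYoungFunction φ) (t : ℝ≥0∞) :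
    ∃ u, ∀ w, t < φ w ↔ u < w := by
  refine ⟨sSup {w | φ w ≤ t}, fun w => ⟨fun hw => ?_, fun hw => ?_⟩⟩
  · by_contra! hle
    have hev : ∀ v < w, φ v ≤ t := fun v hv => by
      obtain ⟨v', hv', hlt⟩ := lt_sSup_iff.1 (hv.trans_le hle)
      exact (hφ.mono hlt.le).trans hv'
    rcases eq_or_ne w 0 with rfl | hw0
    · simp [hφ.map_zero] at hw
    have : (nhdsWithin w (Iio w)).NeBot := nhdsLT_neBot_of_exists_lt ⟨0, pos_iff_ne_zero.2 hw0⟩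
    exact absurd hw (not_lt.2 (le_of_tendsto (hφ.left_continuous w)
      (eventually_nhdsWithin_of_forall hev)))
  · by_contra! hle
    exact absurd hw (not_lt.2 (le_sSup hle))

theorem IsYoungFunction.map_mul_le {φ : ℝ≥0∞ → ℝ≥0∞} (hφ : IsYoungFunction φ) {c : ℝ≥0∞}
    (hc : c ≤ 1) (x : ℝ≥0∞) : φ (c * x) ≤ c * φ x := by
  simpa [hφ.map_zero] using hφ.convex (x := x) (y := 0) (add_tsub_cancel_of_le hc)

theorem ENNReal.lt_mul_inv_iff_lt_div {c u w : ℝ≥0∞} (hc0 : c ≠ 0) :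
    u < c * w⁻¹ ↔ w < c / u := by
  rw [← div_eq_mul_inv]
  rcases eq_or_ne w 0 with rfl | hw0
  · simp [ENNReal.div_zero hc0, ENNReal.div_pos_iff, hc0, lt_top_iff_ne_top]
  rcases eq_or_ne w ∞ with rfl | hwt
  · simp
  rw [ENNReal.lt_div_iff_mul_lt (.inl hw0) (.inl hwt),
    ENNReal.lt_div_iff_mul_lt (.inr hwt) (.inr hw0), mul_comm]

theorem ENNReal.add_pow_le_two_pow_mul (r s : ℝ≥0∞) {n : ℕ} (hn : n ≠ 0) :
    (r + s) ^ n ≤ 2 ^ (n - 1) * (r ^ n + s ^ n) := by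
  induction r with
  | top => simp [hn]
  | coe r =>
    induction s with
    | top => simp [hn]
    | coe s => exact_mod_cast add_pow_le r.2 s.2 n

theorem ENNReal.le_mul_sInf_add_sInf {A B : Set ℝ≥0∞} {K c : ℝ≥0∞} (hK0 : K ≠ 0) (hK : K ≠ ∞)
    (h : ∀ s ∈ A, ∀ t ∈ B, c ≤ K * (s + t)) : c ≤ K * (sInf A + sInf B) := by
  have h' : ∀ s ∈ A, ∀ t ∈ B, c / K ≤ s + t := fun s hs t ht =>
    ENNReal.div_le_of_le_mul' (h s hs t ht)
  rw [mul_comm, ← ENNReal.div_le_iff hK0 hK]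
  refine tsub_le_iff_right.1 (le_sInf fun s hs => ?_)
  rw [tsub_le_iff_left, add_comm, ← tsub_le_iff_left]
  exact le_sInf fun t ht => tsub_le_iff_left.2 (h' s hs t ht)

/-- Volume of a ball with extended radius. -/
theorem volume_enorm_lt (hN : 0 < N) (r : ℝ≥0∞) :
    volume {x : ES N | ‖x‖ₑ < r} = r ^ N * volume (Metric.ball (0 : ES N) 1) := by
  have : Nonempty (Fin N) := ⟨⟨0, hN⟩⟩
  induction r with
  | top =>
    have hpos : volume (Metric.ball (0 : ES N) 1) ≠ 0 :=
      (Metric.measure_ball_pos _ _ one_pos).ne'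
    have : {x : ES N | ‖x‖ₑ < ⊤} = univ := by ext; simp
    rw [this, ENNReal.top_pow hN.ne', ENNReal.top_mul hpos,
      measure_univ_of_isAddLeftInvariant]
  | coe r =>
    have : {x : ES N | ‖x‖ₑ < r} = Metric.ball 0 r := by
      ext x
      simp [enorm_eq_nnnorm, ← NNReal.coe_lt_coe]
    rw [this, Measure.addHaar_ball _ _ r.coe_nonneg]
    simp [ENNReal.ofReal_pow]

/-- A sum of two sets is at most `2 ^ (N - 1)` times as large as the two balls with their
enclosing radii. -/
theorem volume_add_le (hN : 0 < N) (X Y : Set (ES N)) :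
    volume (X + Y) ≤ 2 ^ (N - 1) *
      (volume {x : ES N | ‖x‖ₑ < encRadius X} + volume {x : ES N | ‖x‖ₑ < encRadius Y}) := by
  set v := volume (Metric.ball (0 : ES N) 1) with hv
  have hv0 : v ≠ 0 := (Metric.measure_ball_pos _ _ one_pos).ne'
  have hvt : v ≠ ∞ := measure_ball_lt_top.ne
  set V : ℝ≥0∞ → ℝ≥0∞ := fun r => r ^ N * v with hV
  have hVc : Continuous V :=
    (ENNReal.continuous_mul_const hvt).comp (ENNReal.continuous_pow N)
  have hVm : Monotone V := fun r s hrs => by simp only [hV]; gcongr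
  have hVt : V ⊤ = ⊤ := by simp [hV, hN.ne', hv0]
  rw [volume_enorm_lt hN, volume_enorm_lt hN]
  change _ ≤ 2 ^ (N - 1) * (V (sInf _) + V (sInf _))
  rw [hVm.map_sInf_of_continuousAt hVc.continuousAt hVt,
    hVm.map_sInf_of_continuousAt hVc.continuousAt hVt]
  refine ENNReal.le_mul_sInf_add_sInf (by simp) (by simp) ?_
  rintro _ ⟨r, ⟨c, hc⟩, rfl⟩ _ ⟨s, ⟨d, hd⟩, rfl⟩
  have hball : volume (X + Y) ≤ (r + s) ^ N * v := by
    by_cases hrs : r + s = ⊤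
    · simp [hrs, hN.ne', hv0]
    have hsub : X + Y ⊆ Metric.closedBall (c + d) (r + s).toReal := by
      rintro _ ⟨x, hx, y, hy, rfl⟩
      have := (edist_add_add_le x y c d).trans (add_le_add (hc x hx) (hd y hy))
      rw [Metric.mem_closedBall, dist_edist]
      exact ENNReal.toReal_mono hrs this
    refine (measure_mono hsub).trans ?_
    rw [Measure.addHaar_closedBall _ _ ENNReal.toReal_nonneg]
    simp [ENNReal.ofReal_pow, ENNReal.ofReal_toReal hrs, hv]
  calc volume (X + Y) ≤ (r + s) ^ N * v := hball
    _ ≤ 2 ^ (N - 1) * (r ^ N + s ^ N) * v := by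
        gcongr
        exact ENNReal.add_pow_le_two_pow_mul r s hN.ne'
    _ = 2 ^ (N - 1) * (V r + V s) := by simp only [hV]; ring

theorem toENN_mono : Monotone toENN := fun _ _ h => EReal.toENNReal_le_toENNReal h

theorem toENN_coe (η : ℝ≥0) : toENN ((η : ℝ) : EReal) = η := by
  simp [toENN]

/-- Strict sublevel sets are exhausted by the strict sublevel sets at smaller levels. -/
theorem measure_lt_le_of_forall_lt {α : Type*} [MeasurableSpace α] (μ : Measure α)
    {h : α → ℝ≥0∞} {ξ C : ℝ≥0∞} (H : ∀ η < ξ, μ {x | h x < η} ≤ C) : μ {x | h x < ξ} ≤ C := by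
  rcases eq_or_ne ξ 0 with rfl | hξ
  · simp
  obtain ⟨u, hu, hlt, htend⟩ := exists_seq_strictMono_tendsto' (pos_iff_ne_zero.2 hξ)
  have hset : {x | h x < ξ} = ⋃ n, {x | h x < u n} := by
    ext x
    simp only [mem_ofPred_eq, mem_iUnion]
    exact ⟨fun hx => (htend.eventually (lt_mem_nhds hx)).exists,
      fun ⟨n, hn⟩ => hn.trans (hlt n).2⟩
  have hmono : Monotone fun n => {x | h x < u n} := fun m n hmn x hx =>
    lt_of_lt_of_le hx (hu.monotone hmn)
  rw [hset, hmono.measure_iUnion]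
  exact iSup_le fun n => H _ (hlt n).2

/-- The distribution function of an infimal convolution is controlled by those of the lower
transforms. -/
theorem volume_infConvE_lt_le (hN : 0 < N) {f g : ES N → EReal} {a b e : ℝ}
    (ha : ∀ x, (a : EReal) ≤ f x) (hb : ∀ x, (b : EReal) ≤ g x)
    (hae : 0 ≤ a - e) (hbe : 0 ≤ b + e) (ξ : ℝ≥0∞) :
    volume {x | toENN (infConvE f g x) < ξ} ≤ 2 ^ (N - 1) *
      (volume {x | toENN (checkE f x - (e : EReal)) < ξ} +
        volume {x | toENN (checkE g x + (e : EReal)) < ξ}) := by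
  refine measure_lt_le_of_forall_lt _ fun η hη => ?_
  lift η to ℝ≥0 using hη.ne_top
  have hsub : {x | toENN (infConvE f g x) < η} ⊆
      {x | f x < ((η + e : ℝ) : EReal)} + {x | g x < ((η - e : ℝ) : EReal)} := by
    intro x hx
    have hx' : infConvE f g x < ((η : ℝ) : EReal) := by
      by_contra! hle
      exact absurd hx (not_lt.2 (toENN_coe η ▸ toENN_mono hle))
    obtain ⟨y, hy⟩ := iInf_lt_iff.1 hx'
    refine ⟨x - y, ?_, y, ?_, sub_add_cancel x y⟩
    · by_contra! hle
      simp only [mem_ofPred_eq, not_lt] at hle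
      refine absurd hy (not_lt.2 (le_trans ?_ (add_le_add hle (hb y))))
      rw [← EReal.coe_add, EReal.coe_le_coe_iff]
      linarith
    · by_contra! hle
      simp only [mem_ofPred_eq, not_lt] at hle
      refine absurd hy (not_lt.2 (le_trans ?_ (add_le_add (ha (x - y)) hle)))
      rw [← EReal.coe_add, EReal.coe_le_coe_iff]
      linarith
  refine (measure_mono hsub).trans ((volume_add_le hN _ _).trans ?_)
  gcongr 2 ^ (N - 1) * (volume ?_ + volume ?_)
  · intro x hx
    have hle := EReal.sub_le_sub (checkE_le_of_enorm_lt_encRadius hx) (le_refl (e : EReal))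
    rw [← EReal.coe_sub, add_sub_cancel_right] at hle
    exact (toENN_coe η ▸ toENN_mono hle).trans_lt hη
  · intro x hx
    have hle := add_le_add_left (checkE_le_of_enorm_lt_encRadius hx) (e : EReal)
    rw [← EReal.coe_add, sub_add_cancel] at hle
    exact (toENN_coe η ▸ toENN_mono hle).trans_lt hη

theorem measurable_toENN_checkE_add (f : ES N → EReal) (e : EReal) :
    Measurable fun x => toENN (checkE f x + e) := by
  have hmono : Monotone fun t => toENN (checkRadial f t + e) := fun s t hst =>
    toENN_mono (add_le_add_left (checkRadial_mono f hst) e)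
  exact hmono.measurable.comp measurable_nnnorm

/-- Functions whose reciprocals satisfy a weighted distribution inequality satisfy the
corresponding inequality for Young integrals. -/
theorem lintegral_young_inv_le {φ : ℝ≥0∞ → ℝ≥0∞} (hφ : IsYoungFunction φ)
    {α : Type*} [MeasurableSpace α] (μ : Measure α) [SFinite μ] {h p q : α → ℝ≥0∞} {K c : ℝ≥0∞}
    (hK : K ≠ ∞) (hc0 : c ≠ 0) (hp : Measurable p) (hq : Measurable q)
    (H : ∀ ξ, μ {x | h x < ξ} ≤ K * (μ {x | p x < ξ} + μ {x | q x < ξ})) :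
    ∫⁻ x, φ (c * (h x)⁻¹) ∂μ ≤
      K * (∫⁻ x, φ (c * (p x)⁻¹) ∂μ + ∫⁻ x, φ (c * (q x)⁻¹) ∂μ) := by
  have hm {p : α → ℝ≥0∞} (hp : Measurable p) : Measurable fun x => φ (c * (p x)⁻¹) :=
    hφ.mono.measurable.comp (hp.inv.const_mul c)
  have hanti {p : α → ℝ≥0∞} :
      Measurable fun t : ℝ => μ {x | ENNReal.ofReal t < φ (c * (p x)⁻¹)} := by
    refine Antitone.measurable fun s t hst => measure_mono fun x hx => ?_
    exact lt_of_le_of_lt (ENNReal.ofReal_le_ofReal hst) hx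
  rw [lintegral_eq_lintegral_meas_ofReal_lt μ (hm hp),
    lintegral_eq_lintegral_meas_ofReal_lt μ (hm hq), ← lintegral_add_left hanti,
    ← lintegral_const_mul' _ _ hK]
  refine (lintegral_le_lintegral_meas_ofReal_lt μ _).trans (lintegral_mono fun t => ?_)
  obtain ⟨u, hu⟩ := hφ.exists_lt_iff (ENNReal.ofReal t)
  simpa only [hu, ENNReal.lt_mul_inv_iff_lt_div hc0] using H (c / u)

/-- The Luxemburg norm inequality implied by a weighted distribution inequality. -/
theorem luxNorm_inv_le {φ : ℝ≥0∞ → ℝ≥0∞} (hφ : IsYoungFunction φ) {h p q : ES N → ℝ≥0∞}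
    {K : ℝ≥0∞} (hK1 : 1 ≤ K) (hK : K ≠ ∞) (hp : Measurable p) (hq : Measurable q)
    (H : ∀ ξ, volume {x | h x < ξ} ≤ K * (volume {x | p x < ξ} + volume {x | q x < ξ})) :
    luxNorm φ (fun x => (h x)⁻¹) ≤
      K * (luxNorm φ (fun x => (p x)⁻¹) + luxNorm φ (fun x => (q x)⁻¹)) := by
  have hK0 : K ≠ 0 := (zero_lt_one.trans_le hK1).ne'
  refine ENNReal.le_mul_sInf_add_sInf hK0 hK fun s ⟨hs0, hs⟩ t ⟨ht0, ht⟩ => ?_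
  by_cases hst : s + t = ∞
  · simp [hst, hK0]
  obtain ⟨hst', htt'⟩ := ENNReal.add_ne_top.1 hst
  have hr0 : K * (s + t) ≠ 0 := mul_ne_zero hK0 (by simp [hs0.ne'])
  have hr : K * (s + t) ≠ ∞ := ENNReal.mul_ne_top hK hst
  have hscale (w : ℝ≥0∞) (k : ES N → ℝ≥0∞) (hw0 : 0 < w) (hw : w ≠ ∞) (hle : w ≤ K * (s + t))
      (hk : ∫⁻ x, φ (w⁻¹ * (k x)⁻¹) ≤ 1) :
      ∫⁻ x, φ ((K * (s + t))⁻¹ * (k x)⁻¹) ≤ w / (K * (s + t)) := by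
    have hd : w / (K * (s + t)) ≤ 1 := ENNReal.div_le_of_le_mul (by simpa using hle)
    calc ∫⁻ x, φ ((K * (s + t))⁻¹ * (k x)⁻¹)
        ≤ ∫⁻ x, w / (K * (s + t)) * φ (w⁻¹ * (k x)⁻¹) := by
          refine lintegral_mono fun x => le_trans (le_of_eq ?_) (hφ.map_mul_le hd _)
          congr 1
          rw [← mul_assoc, div_eq_mul_inv, mul_comm w, mul_assoc _ w,
            ENNReal.mul_inv_cancel hw0.ne' hw, mul_one]
      _ = w / (K * (s + t)) * ∫⁻ x, φ (w⁻¹ * (k x)⁻¹) :=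
          lintegral_const_mul' _ _ (hd.trans_lt ENNReal.one_lt_top).ne
      _ ≤ w / (K * (s + t)) := mul_le_of_le_one_right' hk
  have hsum : s + t ≤ K * (s + t) := le_mul_of_one_le_left' hK1
  refine sInf_le ⟨pos_iff_ne_zero.2 hr0, ?_⟩
  calc ∫⁻ x, φ ((K * (s + t))⁻¹ * (h x)⁻¹)
      ≤ K * ((∫⁻ x, φ ((K * (s + t))⁻¹ * (p x)⁻¹)) + ∫⁻ x, φ ((K * (s + t))⁻¹ * (q x)⁻¹)) :=
        lintegral_young_inv_le hφ volume hK (ENNReal.inv_ne_zero.2 hr) hp hq H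
    _ ≤ K * (s / (K * (s + t)) + t / (K * (s + t))) := by
        gcongr
        · exact hscale s p hs0 hst' (le_self_add.trans hsum) hs
        · exact hscale t q ht0 htt' (le_add_self.trans hsum) ht
    _ = 1 := by
        rw [ENNReal.div_add_div_same, ← mul_div_assoc, ENNReal.div_self hr0 hr]

theorem luxNorm_inv_infConv_le {N : ℕ} (hN : 0 < N)
    (f g : ES N → EReal) (hf : Measurable f) (hg : Measurable g)
    (hf' : ∀ x, f x ≠ ⊥) (hg' : ∀ x, g x ≠ ⊥)
    (a b : ℝ) (ha : (⨅ x, f x) = (a : EReal)) (hb : (⨅ x, g x) = (b : EReal))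
    (hab : 0 ≤ a + b) :
    (∀ x, 0 ≤ infConvE f g x) ∧
    (∀ x, 0 ≤ checkE f x - (((a - b) / 2 : ℝ) : EReal)) ∧
    (∀ x, 0 ≤ checkE g x + (((a - b) / 2 : ℝ) : EReal)) ∧
    ∀ φ : ℝ≥0∞ → ℝ≥0∞, IsYoungFunction φ →
      luxNorm φ (fun x => eInv (infConvE f g x)) ≤
        2 ^ (N - 1) *
          (luxNorm φ (fun x => eInv (checkE f x - (((a - b) / 2 : ℝ) : EReal))) +
            luxNorm φ (fun x => eInv (checkE g x + (((a - b) / 2 : ℝ) : EReal)))) := by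
  have ha' : ∀ x, (a : EReal) ≤ f x := fun x => ha ▸ iInf_le f x
  have hb' : ∀ x, (b : EReal) ≤ g x := fun x => hb ▸ iInf_le g x
  refine ⟨fun x => le_iInf fun y => ?_, fun x => ?_, fun x => ?_, fun φ hφ => ?_⟩
  · refine le_trans ?_ (add_le_add (ha' (x - y)) (hb' y))
    exact_mod_cast hab
  · refine le_trans ?_ (EReal.sub_le_sub (le_checkE ha' x) le_rfl)
    rw [← EReal.coe_sub]
    exact_mod_cast (by linarith : 0 ≤ a - (a - b) / 2)
  · refine le_trans ?_ (add_le_add_left (le_checkE hb' x) _)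
    rw [← EReal.coe_add]
    exact_mod_cast (by linarith : 0 ≤ b + (a - b) / 2)
  · refine luxNorm_inv_le hφ (one_le_pow₀ one_le_two) (by simp)
      ?_ (measurable_toENN_checkE_add g _)
      (volume_infConvE_lt_le hN ha' hb' (by linarith) (by linarith))
    simpa only [sub_eq_add_neg] using measurable_toENN_checkE_add f (-(((a - b) / 2 : ℝ) : EReal))

end
end

section
/- Let f : ℝ^N → (−∞, ∞] with m_f := inf f > −∞, and suppose there are constants c > 0 and α > 0 such that f(x) ≥ h(x) := c|x|^α for all |x| large enough. Let z < m_f and let B be an open ball centered at the origin such that f ≥ h and h ≥ 2z outside B. Then for every Young function φ: ‖(f̌ − z)⁻¹‖_φ ≤ 2 ‖h⁻¹ · χ_{ℝ^N∖B}‖_φ + (m_f − z)⁻¹ ‖χ_B‖_φ. In particular, if h⁻¹ restricted to ℝ^N∖B lies in the Orlicz space L_φ, then (f̌ − z)⁻¹ ∈ L_φ. -/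
open MeasureTheory Filter Set
open scoped ENNReal NNReal Pointwise

noncomputable section

variable {N : ℕ}

lemma toENN_eq_toENNReal (a : EReal) : toENN a = a.toENNReal := rfl

lemma eInv_anti {a b : EReal} (h : a ≤ b) : eInv b ≤ eInv a :=
  ENNReal.inv_le_inv.2 (EReal.toENNReal_le_toENNReal h)

lemma le_checkE_of_forall {f : ES N → EReal} {x a : ES N} {η : EReal}
    (h : ∀ y, f y < η → dist y a ≤ ‖x‖) : η ≤ checkE f x := by
  rw [checkE, EReal.le_neg]
  refine sInf_le ?_
  refine (sInf_le ?_ : encRadius {y | -η < -f y} ≤ (‖x‖₊ : ℝ≥0∞))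
  refine ⟨a, fun y hy => ?_⟩
  rw [edist_nndist, ENNReal.coe_le_coe]
  exact h y (EReal.neg_lt_neg_iff.1 hy)

lemma iInf_le_checkE (f : ES N → EReal) (x : ES N) : ⨅ y, f y ≤ checkE f x :=
  le_checkE_of_forall (a := 0) fun y hy => absurd (iInf_le f y) hy.not_ge

lemma le_checkE_of_radial {f : ES N → EReal} {x : ES N} {η : EReal}
    (h : ∀ y, ‖x‖ ≤ ‖y‖ → η ≤ f y) : η ≤ checkE f x := by
  refine le_checkE_of_forall (a := 0) fun y hy => ?_
  rw [dist_zero_right]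
  by_contra! hxy
  exact (h y hxy.le).not_gt hy

section Luxemburg

variable {φ : ℝ≥0∞ → ℝ≥0∞}

lemma luxNorm_mono (hφ : Monotone φ) {g h : ES N → ℝ≥0∞} (hgh : ∀ x, g x ≤ h x) :
    luxNorm φ g ≤ luxNorm φ h :=
  sInf_le_sInf fun r hr => ⟨hr.1, (lintegral_mono fun x => hφ (by gcongr; exact hgh x)).trans hr.2⟩

lemma luxNorm_zero (hφ : φ 0 = 0) : luxNorm φ (fun _ : ES N => 0) = 0 := by
  refine le_antisymm (le_of_forall_gt fun r hr => ?_) bot_le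
  obtain ⟨s, hs0, hsr⟩ := exists_between hr
  have hmem : s ∈ {r : ℝ≥0∞ | 0 < r ∧ ∫⁻ _ : ES N, φ (r⁻¹ * 0) ≤ 1} := ⟨hs0, by simp [hφ]⟩
  exact (sInf_le hmem).trans_lt hsr

lemma luxNorm_const_mul_le (hφ : φ 0 = 0) (g : ES N → ℝ≥0∞) {a : ℝ≥0∞} (ha : a ≠ ∞) :
    luxNorm φ (fun x => a * g x) ≤ a * luxNorm φ g := by
  rcases eq_or_ne a 0 with rfl | ha0
  · simp [luxNorm_zero hφ]
  rw [luxNorm, luxNorm, sInf_eq_iInf' {r : ℝ≥0∞ | 0 < r ∧ ∫⁻ x, φ (r⁻¹ * g x) ≤ 1},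
    ENNReal.mul_iInf_of_ne ha0 ha]
  refine le_iInf fun ⟨r, hr0, hr⟩ => sInf_le ⟨ENNReal.mul_pos ha0 hr0.ne', ?_⟩
  convert hr using 4 with x
  rw [ENNReal.mul_inv (.inl ha0) (.inl ha), mul_comm a⁻¹, mul_assoc,
    ENNReal.inv_mul_cancel_left ha0 ha]

lemma IsYoungFunction.map_inv_add_mul_le (hφ : IsYoungFunction φ) {r s : ℝ≥0∞}
    (hr : r ≠ 0) (hr' : r ≠ ∞) (hs : s ≠ 0) (hs' : s ≠ ∞) (x y : ℝ≥0∞) :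
    φ ((r + s)⁻¹ * (x + y)) ≤
      (r + s)⁻¹ * r * φ (r⁻¹ * x) + (r + s)⁻¹ * s * φ (s⁻¹ * y) := by
  have h1 : (r + s)⁻¹ * r + (r + s)⁻¹ * s = 1 := by
    rw [← mul_add, ENNReal.inv_mul_cancel (by simp [hr]) (by simp [hr', hs'])]
  convert hφ.convex h1 (x := r⁻¹ * x) (y := s⁻¹ * y) using 2
  rw [mul_assoc, mul_assoc, ENNReal.mul_inv_cancel_left hr hr',
    ENNReal.mul_inv_cancel_left hs hs', mul_add]

lemma luxNorm_add_le (hφ : IsYoungFunction φ) {g h : ES N → ℝ≥0∞} (hg : Measurable g) :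
    luxNorm φ (fun x => g x + h x) ≤ luxNorm φ g + luxNorm φ h := by
  rw [luxNorm, luxNorm, luxNorm, ENNReal.sInf_add]
  refine le_iInf₂ fun r hr => ?_
  rw [ENNReal.add_sInf]
  refine le_iInf₂ fun s hs => ?_
  rcases eq_or_ne r ∞ with rfl | hr'
  · simp
  rcases eq_or_ne s ∞ with rfl | hs'
  · simp
  refine sInf_le ⟨hr.1.trans_le le_self_add, ?_⟩
  have hm : Measurable fun x => φ (r⁻¹ * g x) := hφ.mono.measurable.comp (hg.const_mul _)
  have hk : (r + s)⁻¹ ≠ ∞ := by simp [hr.1.ne']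
  calc ∫⁻ x, φ ((r + s)⁻¹ * (g x + h x))
      ≤ ∫⁻ x, ((r + s)⁻¹ * r * φ (r⁻¹ * g x) + (r + s)⁻¹ * s * φ (s⁻¹ * h x)) :=
        lintegral_mono fun x => hφ.map_inv_add_mul_le hr.1.ne' hr' hs.1.ne' hs' _ _
    _ = (r + s)⁻¹ * r * (∫⁻ x, φ (r⁻¹ * g x)) + (r + s)⁻¹ * s * ∫⁻ x, φ (s⁻¹ * h x) := by
        rw [lintegral_add_left (hm.const_mul _), lintegral_const_mul _ hm,
          lintegral_const_mul' _ _ (ENNReal.mul_ne_top hk hs')]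
    _ ≤ (r + s)⁻¹ * r * 1 + (r + s)⁻¹ * s * 1 := by gcongr; exacts [hr.2, hs.2]
    _ = 1 := by
        rw [mul_one, mul_one, ← mul_add,
          ENNReal.inv_mul_cancel (by simp [hr.1.ne']) (by simp [hr', hs'])]

lemma luxNorm_ball_indicator_ne_top (hφ : IsYoungFunction φ) {t : ℝ≥0∞} (ht : t ≠ 0)
    (hφt : φ t ≠ ∞) (ρ : ℝ) :
    luxNorm φ ((Metric.ball (0 : ES N) ρ).indicator fun _ => (1 : ℝ≥0∞)) ≠ ∞ := by
  set V : ℝ≥0∞ := volume (Metric.ball (0 : ES N) ρ) with hV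
  have hV' : V ≠ ∞ := measure_ball_lt_top.ne
  set M : ℝ≥0∞ := φ t * V + 1
  have hM : M ≠ ∞ := by simp [M, ENNReal.mul_ne_top hφt hV']
  have hM1 : 1 ≤ M := le_add_self
  have hM0 : M ≠ 0 := (zero_lt_one.trans_le hM1).ne'
  obtain ⟨u, hu0, hut⟩ := exists_between (pos_iff_ne_zero.2 ht)
  have hscale : φ (M⁻¹ * u) ≤ M⁻¹ * φ t := by
    have h := hφ.convex (x := u) (y := 0)
      (add_tsub_cancel_of_le (ENNReal.inv_le_one.2 hM1))
    simp only [mul_zero, add_zero, hφ.map_zero] at h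
    exact h.trans (by gcongr; exact hφ.mono hut.le)
  have hmem : (M⁻¹ * u)⁻¹ ∈ {r : ℝ≥0∞ | 0 < r ∧ ∫⁻ x, φ (r⁻¹ *
      (Metric.ball (0 : ES N) ρ).indicator (fun _ => (1 : ℝ≥0∞)) x) ≤ 1} := by
    refine ⟨ENNReal.inv_pos.2 (ENNReal.mul_ne_top (by simp [hM0]) (ne_top_of_lt hut)), ?_⟩
    have hint : ∀ x, φ ((M⁻¹ * u)⁻¹⁻¹ *
        (Metric.ball (0 : ES N) ρ).indicator (fun _ => (1 : ℝ≥0∞)) x) =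
        (Metric.ball (0 : ES N) ρ).indicator (fun _ => φ (M⁻¹ * u)) x := fun x => by
      by_cases hx : x ∈ Metric.ball (0 : ES N) ρ
      · simp only [indicator_of_mem hx, inv_inv, mul_one]
      · simp only [indicator_of_notMem hx, mul_zero, hφ.map_zero]
    rw [lintegral_congr hint, lintegral_indicator_const measurableSet_ball]
    calc φ (M⁻¹ * u) * V ≤ M⁻¹ * φ t * V := by gcongr
      _ = M⁻¹ * (φ t * V) := mul_assoc _ _ _
      _ ≤ M⁻¹ * M := by gcongr; exact le_self_add
      _ = 1 := ENNReal.inv_mul_cancel hM0 hM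
  refine ne_top_of_le_ne_top ?_ (sInf_le hmem)
  simp [hM, hu0.ne']

lemma exists_map_ne_top_of_luxNorm_ne_top (hN : 0 < N) (hφ : Monotone φ) {g : ES N → ℝ≥0∞}
    (hg : Measurable g) {ρ : ℝ} (hpos : ∀ x ∉ Metric.ball (0 : ES N) ρ, g x ≠ 0)
    (h : luxNorm φ g ≠ ∞) : ∃ t, t ≠ 0 ∧ φ t ≠ ∞ := by
  obtain ⟨r, ⟨hr0, hr⟩, hr'⟩ := sInf_lt_iff.1 h.lt_top
  have hfin : ∀ᵐ x, φ (r⁻¹ * g x) < ∞ :=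
    ae_lt_top (hφ.measurable.comp (hg.const_mul _)) (ne_top_of_le_ne_top ENNReal.one_ne_top hr)
  by_contra! hall
  have hball : ∀ᵐ x, x ∈ Metric.ball (0 : ES N) ρ := by
    filter_upwards [hfin] with x hx
    by_contra hxB
    exact hx.ne (hall _ (mul_ne_zero (ENNReal.inv_ne_zero.2 hr'.ne) (hpos x hxB)))
  have : NeZero N := ⟨hN.ne'⟩
  have hle : volume (univ : Set (ES N)) ≤ volume (Metric.ball (0 : ES N) ρ) :=
    measure_mono_ae (hball.mono fun x hx _ => hx)
  rw [measure_univ_of_isAddLeftInvariant] at hle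
  exact measure_ball_lt_top.ne (top_le_iff.1 hle)

end Luxemburg

lemma eInv_coe_sub_le {a z : ℝ} (h : 2 * z ≤ a) :
    eInv ((a : EReal) - (z : EReal)) ≤ 2 * (ENNReal.ofReal a)⁻¹ := by
  rw [eInv, toENN_eq_toENNReal, ← EReal.coe_sub, EReal.real_coe_toENNReal]
  have h2 : (2 : ℝ≥0∞) * (ENNReal.ofReal a)⁻¹ = (ENNReal.ofReal (a / 2))⁻¹ := by
    rw [ENNReal.ofReal_div_of_pos two_pos, ENNReal.ofReal_ofNat,
      ENNReal.inv_div (by simp) (by simp), ENNReal.div_eq_inv_mul, mul_comm]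
  rw [h2]
  exact ENNReal.inv_le_inv.2 (ENNReal.ofReal_le_ofReal (by linarith))

theorem luxNorm_inv_checkE_sub_le {N : ℕ} (hN : 0 < N)
    (f : ES N → EReal) (hf' : ∀ x, f x ≠ ⊥) (hmf : (⊥ : EReal) < ⨅ x, f x)
    (c α : ℝ) (hc : 0 < c) (hα : 0 < α)
    (hfar : ∃ R : ℝ, ∀ x : ES N, R ≤ ‖x‖ → ((c * ‖x‖ ^ α : ℝ) : EReal) ≤ f x)
    (z : ℝ) (hz : (z : EReal) < ⨅ x, f x)
    (ρB : ℝ)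
    (hB : ∀ x : ES N, x ∉ Metric.ball (0 : ES N) ρB →
      ((c * ‖x‖ ^ α : ℝ) : EReal) ≤ f x ∧ ((2 * z : ℝ) : EReal) ≤ ((c * ‖x‖ ^ α : ℝ) : EReal))
    (φ : ℝ≥0∞ → ℝ≥0∞) (hφ : IsYoungFunction φ) :
    luxNorm φ (fun x => eInv (checkE f x - (z : EReal))) ≤
      2 * luxNorm φ ((Metric.ball (0 : ES N) ρB)ᶜ.indicator
          (fun x => (ENNReal.ofReal (c * ‖x‖ ^ α))⁻¹)) +
        eInv ((⨅ x, f x) - (z : EReal)) *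
          luxNorm φ ((Metric.ball (0 : ES N) ρB).indicator (fun _ => (1 : ℝ≥0∞))) ∧
    (luxNorm φ ((Metric.ball (0 : ES N) ρB)ᶜ.indicator
        (fun x => (ENNReal.ofReal (c * ‖x‖ ^ α))⁻¹)) ≠ ∞ →
      luxNorm φ (fun x => eInv (checkE f x - (z : EReal))) ≠ ∞) := by
  have hmono := hφ.mono
  set B := Metric.ball (0 : ES N) ρB with hBdef
  set H : ES N → ℝ≥0∞ := Bᶜ.indicator (fun x => (ENNReal.ofReal (c * ‖x‖ ^ α))⁻¹) with hH
  set a : ℝ≥0∞ := eInv ((⨅ x, f x) - (z : EReal)) with ha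
  have ha' : a ≠ ∞ :=
    ENNReal.inv_ne_top.2 (EReal.toENNReal_ne_zero_iff.2 (EReal.sub_pos.2 hz))
  have hHm : Measurable H := by
    refine Measurable.indicator ?_ measurableSet_ball.compl
    fun_prop
  have hbound : ∀ x, eInv (checkE f x - (z : EReal)) ≤
      2 * H x + a * B.indicator (fun _ => (1 : ℝ≥0∞)) x := fun x => by
    by_cases hx : x ∈ B
    · rw [indicator_of_mem hx, mul_one]
      exact (eInv_anti (EReal.sub_le_sub (iInf_le_checkE f x) le_rfl)).trans le_add_self
    · have hxρ : ρB ≤ ‖x‖ := by simpa [hBdef] using hx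
      have hle : ((c * ‖x‖ ^ α : ℝ) : EReal) ≤ checkE f x :=
        le_checkE_of_radial fun y hy => by
          have hyB : y ∉ B := by simpa [hBdef] using hxρ.trans hy
          refine le_trans (EReal.coe_le_coe_iff.2 ?_) (hB y hyB).1
          gcongr
      rw [hH, indicator_of_mem (mem_compl hx)]
      exact ((eInv_anti (EReal.sub_le_sub hle le_rfl)).trans
        (eInv_coe_sub_le (EReal.coe_le_coe_iff.1 (hB x hx).2))).trans le_self_add
  have hmain : luxNorm φ (fun x => eInv (checkE f x - (z : EReal))) ≤
      2 * luxNorm φ H + a * luxNorm φ (B.indicator (fun _ => (1 : ℝ≥0∞))) :=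
    (luxNorm_mono hmono hbound).trans <| (luxNorm_add_le hφ (hHm.const_mul 2)).trans <|
      add_le_add (luxNorm_const_mul_le hφ.map_zero _ (by simp))
        (luxNorm_const_mul_le hφ.map_zero _ ha')
  refine ⟨hmain, fun hfin => ne_top_of_le_ne_top ?_ hmain⟩
  obtain ⟨t, ht, hφt⟩ := exists_map_ne_top_of_luxNorm_ne_top hN hmono hHm (ρ := ρB)
    (fun x hx => by
      rw [hH, indicator_of_mem (mem_compl hx)]
      exact ENNReal.inv_ne_zero.2 ENNReal.ofReal_ne_top) hfin
  exact ENNReal.add_ne_top.2 ⟨ENNReal.mul_ne_top (by simp) hfin,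
    ENNReal.mul_ne_top ha' (luxNorm_ball_indicator_ne_top hφ ht hφt ρB)⟩

end
end

section
/- Let f, g : ℝ^N → (−∞, ∞] be Borel measurable and suppose there are constants c > 0 and α > 0 such that f(x) ≥ c|x|^α and g(x) ≥ c|x|^α for all |x| large enough. Then: (i) if m_f := inf f and m_g := inf g are finite and m_f + m_g > 0, then (f□g)⁻¹ ∈ L^p(ℝ^N) for every p with p ≥ 1 and p > N/α; (ii) if g ≥ 0 and m_{f_+} + m_g > 0 (where f_+ := max{f,0}), then (f⊻g)⁻¹ ∈ L^p(ℝ^N) for every p with p ≥ 1 and p > N/α. -/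
open MeasureTheory Filter Set
open scoped ENNReal NNReal Pointwise

noncomputable section

variable {N : ℕ}

theorem ofReal_le_toENN {r : ℝ} {a : EReal} (h : (r : EReal) ≤ a) :
    ENNReal.ofReal r ≤ toENN a := by
  unfold toENN
  split_ifs with ha
  · exact le_top
  · refine ENNReal.ofReal_le_ofReal ?_
    have hb : a ≠ ⊥ := ne_of_gt ((EReal.bot_lt_coe r).trans_le h)
    rwa [← EReal.coe_toReal ha hb, EReal.coe_le_coe_iff] at h

/-- A function bounded below by a positive constant and by `A * ‖x‖ ^ α - B` for `‖x‖`
large is bounded below by a positive multiple of `(1 + ‖x‖) ^ α` everywhere. -/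
theorem exists_pos_mul_one_add_norm_rpow_le {N : ℕ} {h : ES N → EReal} {m A B R α : ℝ}
    (hm : 0 < m) (hA : 0 < A) (hα : 0 < α) (hlow : ∀ x, (m : EReal) ≤ h x)
    (hgrow : ∀ x, R ≤ ‖x‖ → ((A * ‖x‖ ^ α - B : ℝ) : EReal) ≤ h x) :
    ∃ δ : ℝ, 0 < δ ∧ ∀ x, ((δ * (1 + ‖x‖) ^ α : ℝ) : EReal) ≤ h x := by
  have hev : ∀ᶠ t : ℝ in atTop, 2 * B / A ≤ t ^ α :=
    (tendsto_rpow_atTop hα).eventually_ge_atTop _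
  obtain ⟨T, hT⟩ := eventually_atTop.1 hev
  set S := max (max R 1) T
  have hS1 : 1 ≤ S := (le_max_right R 1).trans (le_max_left _ _)
  have hSα : 0 < (1 + S) ^ α := Real.rpow_pos_of_pos (by linarith) α
  have h2α : (0 : ℝ) < 2 ^ α := Real.rpow_pos_of_pos two_pos α
  refine ⟨min (m / (1 + S) ^ α) (A / 2 / 2 ^ α), by positivity, fun x => ?_⟩
  have hxα : 0 ≤ (1 + ‖x‖) ^ α := by positivity
  rcases le_total S ‖x‖ with hx | hx
  · refine le_trans ?_ (hgrow x (((le_max_left R 1).trans (le_max_left _ _)).trans hx))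
    rw [EReal.coe_le_coe_iff]
    have hB := hT ‖x‖ ((le_max_right _ _).trans hx)
    rw [div_le_iff₀ hA] at hB
    calc _ ≤ A / 2 / 2 ^ α * (1 + ‖x‖) ^ α :=
          mul_le_mul_of_nonneg_right (min_le_right _ _) hxα
      _ ≤ A / 2 / 2 ^ α * (2 * ‖x‖) ^ α := by
          gcongr
          linarith
      _ = A / 2 * ‖x‖ ^ α := by
          rw [Real.mul_rpow two_pos.le (norm_nonneg x)]
          field_simp
      _ ≤ _ := by linarith
  · refine le_trans ?_ (hlow x)
    rw [EReal.coe_le_coe_iff]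
    calc _ ≤ m / (1 + S) ^ α * (1 + ‖x‖) ^ α :=
          mul_le_mul_of_nonneg_right (min_le_left _ _) hxα
      _ ≤ m / (1 + S) ^ α * (1 + S) ^ α := by gcongr
      _ = m := by field_simp

theorem lintegral_eInv_rpow_lt_top {N : ℕ} {h : ES N → EReal} {m A B R α : ℝ}
    (hm : 0 < m) (hA : 0 < A) (hα : 0 < α) (hlow : ∀ x, (m : EReal) ≤ h x)
    (hgrow : ∀ x, R ≤ ‖x‖ → ((A * ‖x‖ ^ α - B : ℝ) : EReal) ≤ h x)
    {p : ℝ} (hp : 1 ≤ p) (hNp : (N : ℝ) / α < p) :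
    ∫⁻ x, eInv (h x) ^ p < ∞ := by
  obtain ⟨δ, hδ, hle⟩ := exists_pos_mul_one_add_norm_rpow_le hm hA hα hlow hgrow
  have hp0 : 0 < p := by linarith
  have hfin : ∫⁻ x : ES N, ENNReal.ofReal ((1 + ‖x‖) ^ (-(α * p))) < ∞ := by
    refine finite_integral_one_add_norm ?_
    rw [finrank_euclideanSpace_fin, mul_comm]
    exact (div_lt_iff₀ hα).1 hNp
  have hbound : ∀ x, eInv (h x) ^ p ≤
      ENNReal.ofReal (δ ^ (-p)) * ENNReal.ofReal ((1 + ‖x‖) ^ (-(α * p))) := by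
    intro x
    have h1 : 0 < 1 + ‖x‖ := by positivity
    have hpos : 0 < δ * (1 + ‖x‖) ^ α := by positivity
    calc eInv (h x) ^ p ≤ (ENNReal.ofReal (δ * (1 + ‖x‖) ^ α))⁻¹ ^ p := by
          unfold eInv
          gcongr
          exact ofReal_le_toENN (hle x)
      _ = ENNReal.ofReal ((δ * (1 + ‖x‖) ^ α) ^ (-p)) := by
          rw [ENNReal.inv_rpow, ← ENNReal.rpow_neg, ENNReal.ofReal_rpow_of_pos hpos]
      _ = _ := by
          rw [← ENNReal.ofReal_mul (by positivity), Real.mul_rpow hδ.le (by positivity),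
            ← Real.rpow_mul h1.le, mul_neg]
  refine (lintegral_mono hbound).trans_lt ?_
  rw [lintegral_const_mul' _ _ ENNReal.ofReal_ne_top]
  exact ENNReal.mul_lt_top ENNReal.ofReal_lt_top hfin

/-- If `f` and `g` grow at least like `c * ‖x‖ ^ α`, then for `‖x‖` large and every `y` one of
`f (x - y)`, `g y` is at least `c / 2 ^ α * ‖x‖ ^ α`. -/
theorem le_left_or_le_right_of_growth {N : ℕ} {f g : ES N → EReal} {c α R : ℝ}
    (hc : 0 < c) (hα : 0 < α)
    (hR : ∀ x : ES N, R ≤ ‖x‖ →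
      ((c * ‖x‖ ^ α : ℝ) : EReal) ≤ f x ∧ ((c * ‖x‖ ^ α : ℝ) : EReal) ≤ g x)
    {x : ES N} (hx : 2 * R ≤ ‖x‖) (y : ES N) :
    ((c / 2 ^ α * ‖x‖ ^ α : ℝ) : EReal) ≤ f (x - y) ∨
      ((c / 2 ^ α * ‖x‖ ^ α : ℝ) : EReal) ≤ g y := by
  have key : ∀ z : ES N, ‖x‖ / 2 ≤ ‖z‖ → c / 2 ^ α * ‖x‖ ^ α ≤ c * ‖z‖ ^ α := by
    intro z hz
    calc c / 2 ^ α * ‖x‖ ^ α = c * (‖x‖ / 2) ^ α := by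
          rw [Real.div_rpow (norm_nonneg x) two_pos.le]
          ring
      _ ≤ c * ‖z‖ ^ α := by gcongr
  have htri : ‖x‖ ≤ ‖x - y‖ + ‖y‖ := by simpa using norm_add_le (x - y) y
  rcases le_total (‖x‖ / 2) ‖y‖ with hy | hy
  · exact Or.inr ((EReal.coe_le_coe_iff.2 (key y hy)).trans (hR y (by linarith)).2)
  · have hxy : ‖x‖ / 2 ≤ ‖x - y‖ := by linarith
    exact Or.inl ((EReal.coe_le_coe_iff.2 (key _ hxy)).trans (hR _ (by linarith)).1)

theorem inv_infConv_mem_Lp_and_inv_infMax_mem_Lp {N : ℕ} (hN : 0 < N)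
    (f g : ES N → EReal) (hf : Measurable f) (hg : Measurable g)
    (hf' : ∀ x, f x ≠ ⊥) (hg' : ∀ x, g x ≠ ⊥)
    (c α : ℝ) (hc : 0 < c) (hα : 0 < α)
    (hfar : ∃ R : ℝ, ∀ x : ES N, R ≤ ‖x‖ →
      ((c * ‖x‖ ^ α : ℝ) : EReal) ≤ f x ∧ ((c * ‖x‖ ^ α : ℝ) : EReal) ≤ g x) :
    ((⊥ : EReal) < (⨅ x, f x) → (⨅ x, f x) < ⊤ →
      (⊥ : EReal) < (⨅ x, g x) → (⨅ x, g x) < ⊤ →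
      0 < (⨅ x, f x) + ⨅ x, g x →
      ∀ p : ℝ, 1 ≤ p → (N : ℝ) / α < p →
        ∫⁻ x, eInv (infConvE f g x) ^ p < ∞) ∧
    ((∀ x, 0 ≤ g x) → 0 < (⨅ x, max (f x) 0) + ⨅ x, g x →
      ∀ p : ℝ, 1 ≤ p → (N : ℝ) / α < p →
        ∫⁻ x, eInv (infMaxE f g x) ^ p < ∞) := by
  obtain ⟨R, hR⟩ := hfar
  have hA : 0 < c / 2 ^ α := by positivity
  constructor
  · intro hf1 hf2 hg1 hg2 hpos p hp hNp
    have hfm : ∀ x, (⨅ x, f x) ≤ f x := iInf_le f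
    have hgm : ∀ x, (⨅ x, g x) ≤ g x := iInf_le g
    generalize (⨅ x, f x) = mf at *
    generalize (⨅ x, g x) = mg at *
    lift mf to ℝ using ⟨hf2.ne, hf1.ne'⟩
    lift mg to ℝ using ⟨hg2.ne, hg1.ne'⟩
    have hm : 0 < mf + mg := by exact_mod_cast hpos
    refine lintegral_eInv_rpow_lt_top (m := mf + mg) (A := c / 2 ^ α) (B := - min mf mg)
      (R := 2 * R) hm hA hα (fun x => le_iInf fun y => ?_) (fun x hx => le_iInf fun y => ?_) hp hNp
    · rw [EReal.coe_add]
      exact add_le_add (hfm _) (hgm _)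
    · rcases le_left_or_le_right_of_growth hc hα hR hx y with h | h
      · refine le_trans ?_ (add_le_add h (hgm y))
        rw [← EReal.coe_add, EReal.coe_le_coe_iff]
        linarith [min_le_right mf mg]
      · refine le_trans ?_ (add_le_add (hfm (x - y)) h)
        rw [← EReal.coe_add, EReal.coe_le_coe_iff]
        linarith [min_le_left mf mg]
  · intro hg0 hpos p hp hNp
    have hmax : 0 < max (⨅ x, max (f x) 0) (⨅ x, g x) := by
      by_contra! hcon
      exact hpos.not_ge (add_nonpos ((le_max_left _ _).trans hcon) ((le_max_right _ _).trans hcon))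
    obtain ⟨m, hm0, hm⟩ := EReal.lt_iff_exists_real_btwn.1 hmax
    refine lintegral_eInv_rpow_lt_top (m := m) (A := c / 2 ^ α) (B := 0) (R := 2 * R)
      (by exact_mod_cast hm0) hA hα (fun x => le_iInf fun y => ?_)
      (fun x hx => le_iInf fun y => ?_) hp hNp
    · refine hm.le.trans (max_le ?_ ((iInf_le g y).trans (le_max_right _ _)))
      exact (iInf_le (fun x => max (f x) 0) (x - y)).trans (max_le_max le_rfl (hg0 y))
    · rw [sub_zero]
      exact le_max_iff.2 (le_left_or_le_right_of_growth hc hα hR hx y)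
end
end
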